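/- Let f₁, f₂ : ℝ → ℝ be nonnegative integrable functions with ∫_ℝ f_i(α) dα = 1, and let P > 0, σ₁² > 0, σ₂² > 0 be reals. For i = 1, 2 define a_n^{(i)} = ∫_{−n}^{n} log₂(1 + Pα²/σ_i²) f_i(α) dα and assume a^{(i)} = ∫_ℝ log₂(1 + Pα²/σ_i²) f_i(α) dα is finite. If for i = 1, 2 there exists a computable function q_i : ℕ × ℕ → ℚ with |a_n^{(i)} − q_i(k,n)| ≤ 2^(−k) for all k, n, then the secrecy capacity C_S = a^{(1)} − a^{(2)} belongs to the class Δ₂; that is, C_S is the difference of two left-computable real numbers. -/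

import Mathlib

open Filter MeasureTheory intervalIntegral

/-- A real number `x` is left-computable (`Σ₁`) if it is the limit of a
monotonically nondecreasing computable sequence of rationals. -/
def LeftComputable (x : ℝ) : Prop :=
  ∃ q : ℕ → ℚ, Computable q ∧ (∀ n, q n ≤ q (n + 1)) ∧
    Tendsto (fun n => (q n : ℝ)) atTop (nhds x)

/-- `x ∈ Δ₂` iff `x` is a difference of two left-computable reals. -/
def Delta2 (x : ℝ) : Prop :=
  ∃ a b : ℝ, LeftComputable a ∧ LeftComputable b ∧ x = a - b

open Encodable in
theorem enc_old (q : ℚ) : @encode ℚ Rat.instEncodable q = Nat.pair (encode q.num) q.den := rfl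

theorem enc_int_ofNat (n : ℕ) : Encodable.encode (Int.ofNat n) = 2 * n := rfl

theorem enc_int_negSucc (n : ℕ) : Encodable.encode (Int.negSucc n) = 2 * n + 1 := rfl

/-- The code of a rational number in the denumeration used for computability. -/
def rEnc (q : ℚ) : ℕ := @Encodable.encode ℚ Rat.instDenumerable.toEncodable q

/-- The `n`-th rational number. -/
def rDec (n : ℕ) : ℚ := Denumerable.ofNat ℚ n

theorem rDec_rEnc (q : ℚ) : rDec (rEnc q) = q := Denumerable.ofNat_encode q

theorem rEnc_rDec (n : ℕ) : rEnc (rDec n) = n := Denumerable.encode_ofNat n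

theorem rEnc_computable : Computable rEnc := Computable.encode

theorem rDec_computable : Computable rDec := Computable.ofNat ℚ

/-- The pair code of a rational number. -/
def ratCode (q : ℚ) : ℕ := Nat.pair (Encodable.encode q.num) q.den

/-- The pair code of the `n`-th rational number. -/
def gcode (n : ℕ) : ℕ := ratCode (rDec n)

open Encodable in
theorem gcode_strictMono : StrictMono gcode := by
  let _ := @decidableRangeEncode ℚ Rat.instEncodable
  have : Infinite (Set.range (@encode ℚ Rat.instEncodable)) :=
    Infinite.of_injective _ (Equiv.ofInjective _ encode_injective).injective
  have key : ∀ n, gcode n =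
      (Nat.Subtype.ofNat (Set.range (@encode ℚ Rat.instEncodable)) n : ℕ) := by
    intro n
    have h1 : Denumerable.ofNat ℚ n = (@equivRangeEncode ℚ Rat.instEncodable).symm
      (Nat.Subtype.ofNat (Set.range (@encode ℚ Rat.instEncodable)) n) := by
      apply Denumerable.ofNat_of_decode
      rfl
    have h2 : gcode n = ((@equivRangeEncode ℚ Rat.instEncodable)
      (Denumerable.ofNat ℚ n) : ℕ) := rfl
    rw [h2, h1, Equiv.apply_symm_apply]
  apply strictMono_nat_of_lt_succ
  intro n
  rw [key, key]
  exact Nat.Subtype.lt_succ_self (Nat.Subtype.ofNat (Set.range (@encode ℚ Rat.instEncodable)) n)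

theorem natAbs_enc (z : ℤ) : z.natAbs = (Encodable.encode z + 1) / 2 := by
  cases z with
  | ofNat n => rw [enc_int_ofNat]; simp; omega
  | negSucc n => rw [enc_int_negSucc]; simp; omega

theorem toNat_enc (z : ℤ) : z.toNat = (1 - Encodable.encode z % 2) * (Encodable.encode z / 2) := by
  cases z with
  | ofNat n => rw [enc_int_ofNat]; simp
  | negSucc n => rw [enc_int_negSucc]; simp

theorem mem_range_gcode (c : ℕ) : c ∈ Set.range gcode ↔
    (0 < c.unpair.2 ∧ ∀ x < c.unpair.2 + 1,
      ((c.unpair.1 + 1) / 2 % x = 0 ∧ c.unpair.2 % x = 0) → x = 1) := by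
  constructor
  · rintro ⟨n, rfl⟩
    simp only [gcode, ratCode, Nat.unpair_pair]
    set q := rDec n
    refine ⟨q.den_pos, fun x _ h => ?_⟩
    rw [← natAbs_enc] at h
    have := Nat.dvd_gcd (Nat.dvd_of_mod_eq_zero h.1) (Nat.dvd_of_mod_eq_zero h.2)
    rw [q.reduced] at this
    exact Nat.dvd_one.1 this
  · rintro ⟨h0, h⟩
    set z : ℤ := Denumerable.ofNat ℤ c.unpair.1 with hz
    have hez : Encodable.encode z = c.unpair.1 := Denumerable.encode_ofNat _
    have hc : Nat.Coprime z.natAbs c.unpair.2 := by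
      rw [natAbs_enc, hez]
      have hd := Nat.gcd_dvd_right ((c.unpair.1 + 1) / 2) c.unpair.2
      apply h _ (Nat.lt_succ_of_le (Nat.le_of_dvd h0 hd))
      exact ⟨Nat.mod_eq_zero_of_dvd (Nat.gcd_dvd_left _ _), Nat.mod_eq_zero_of_dvd hd⟩
    let q : ℚ := ⟨z, c.unpair.2, h0.ne', hc⟩
    refine ⟨rEnc q, ?_⟩
    rw [gcode, rDec_rEnc]
    change Nat.pair (Encodable.encode z) c.unpair.2 = c
    rw [hez, Nat.pair_unpair]

theorem prim_range : PrimrecPred (fun c => c ∈ Set.range gcode) := by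
  have u1 : Primrec (fun c : ℕ => c.unpair.1) := Primrec.fst.comp Primrec.unpair
  have u2 : Primrec (fun c : ℕ => c.unpair.2) := Primrec.snd.comp Primrec.unpair
  have hR : PrimrecRel (fun (x c : ℕ) =>
      ((c.unpair.1 + 1) / 2 % x = 0 ∧ c.unpair.2 % x = 0) → x = 1) := by
    have A : PrimrecPred (fun p : ℕ × ℕ => (p.2.unpair.1 + 1) / 2 % p.1 = 0) :=
      Primrec.eq.comp (Primrec.nat_mod.comp (Primrec.nat_div.comp
        (Primrec.succ.comp (u1.comp Primrec.snd)) (Primrec.const 2)) Primrec.fst) (Primrec.const 0)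
    have B : PrimrecPred (fun p : ℕ × ℕ => p.2.unpair.2 % p.1 = 0) :=
      Primrec.eq.comp (Primrec.nat_mod.comp (u2.comp Primrec.snd) Primrec.fst) (Primrec.const 0)
    have C : PrimrecPred (fun p : ℕ × ℕ => p.1 = 1) :=
      Primrec.eq.comp Primrec.fst (Primrec.const 1)
    exact ((A.and B).not.or C).of_eq (fun p => by tauto)
  have h2 := (PrimrecRel.forall_lt hR).comp (Primrec.succ.comp u2) Primrec.id
  have h1 : PrimrecPred (fun c : ℕ => 0 < c.unpair.2) := Primrec.nat_lt.comp (Primrec.const 0) u2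
  exact (h1.and h2).of_eq (fun c => (mem_range_gcode c).symm)

theorem computable_of_rel {α : Type*} [Primcodable α] (R : α → ℕ → Bool) (hR : Computable₂ R)
    (f : α → ℕ) (h1 : ∀ a, R a (f a) = true) (h2 : ∀ a, ∀ m < f a, R a m = false) :
    Computable f := by
  refine Partrec.of_eq_tot (Partrec.rfind (p := fun a n => Part.some (R a n)) hR) ?_
  intro a
  refine Nat.mem_rfind.2 ⟨?_, fun {m} hm => ?_⟩
  · exact Part.mem_some_iff.2 (h1 a).symm
  · exact Part.mem_some_iff.2 (h2 a m hm).symm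

theorem gcode_computable : Computable gcode := by
  classical
  have hS : Primrec (fun c => decide (c ∈ Set.range gcode)) := prim_range.decide
  let R : ℕ → ℕ → Bool := fun a m => decide (a < m ∧ m ∈ Set.range gcode)
  have hR : Computable₂ R := by
    apply Primrec.to_comp
    have : PrimrecPred (fun p : ℕ × ℕ => p.1 < p.2 ∧ p.2 ∈ Set.range gcode) :=
      PrimrecPred.and (Primrec.nat_lt.comp Primrec.fst Primrec.snd) (prim_range.comp Primrec.snd)
    exact this.decide
  have hex : ∀ a, ∃ m, R a m = true := fun a =>
    ⟨gcode (a + 1), by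
      simp only [R, decide_eq_true_eq]
      exact ⟨lt_of_lt_of_le (Nat.lt_succ_self a) (gcode_strictMono.le_apply), ⟨_, rfl⟩⟩⟩
  let s : ℕ → ℕ := fun a => Nat.find (hex a)
  have hs : Computable s := computable_of_rel R hR s (fun a => Nat.find_spec (hex a))
    (fun a m hm => by simpa using Nat.find_min (hex a) hm)
  have hrec := Computable.nat_rec (f := fun n : ℕ => n) (g := fun _ => gcode 0)
    (h := fun _ p => s p.2) Computable.id (Computable.const _)
    (hs.comp (Computable.snd.comp Computable.snd))
  refine hrec.of_eq fun n => ?_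
  induction n with
  | zero => rfl
  | succ n ih =>
    change s (Nat.rec (gcode 0) (fun y IH => s IH) n) = _
    have ih' : (Nat.rec (gcode 0) (fun y IH => s IH) n : ℕ) = gcode n := ih
    rw [ih']
    apply le_antisymm
    · apply Nat.find_min'
      simp only [R, decide_eq_true_eq]
      exact ⟨gcode_strictMono (Nat.lt_succ_self n), ⟨_, rfl⟩⟩
    · have hsp : R (gcode n) (s (gcode n)) = true := Nat.find_spec (hex (gcode n))
      obtain ⟨h, k, hk⟩ := of_decide_eq_true hsp
      rw [← hk] at h
      exact (gcode_strictMono.monotone (gcode_strictMono.lt_iff_lt.1 h)).trans hk.le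

theorem ratCode_computable : Computable ratCode :=
  (gcode_computable.comp rEnc_computable).of_eq fun q => by
    rw [gcode, rDec_rEnc]

theorem den_computable : Computable (fun q : ℚ => q.den) :=
  ((Computable.snd.comp Computable.unpair).comp ratCode_computable).of_eq fun q => by
    simp [ratCode]

theorem numEnc_computable : Computable (fun q : ℚ => Encodable.encode q.num) :=
  ((Computable.fst.comp Computable.unpair).comp ratCode_computable).of_eq fun q => by
    simp [ratCode]

theorem toNat_computable : Computable (fun q : ℚ => q.num.toNat) := by
  have : Primrec (fun e : ℕ => (1 - e % 2) * (e / 2)) :=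
    Primrec.nat_mul.comp (Primrec.nat_sub.comp (Primrec.const 1)
      (Primrec.nat_mod.comp Primrec.id (Primrec.const 2)))
      (Primrec.nat_div.comp Primrec.id (Primrec.const 2))
  exact (this.to_comp.comp numEnc_computable).of_eq fun q => (toNat_enc q.num).symm

theorem rel_computable (e d N D : ℕ → ℕ) (he : Computable e) (hd : Computable d)
    (hN : Computable N) (hD : Computable D) :
    Computable₂ (fun n m : ℕ => decide (e m * D n = 2 * N n * d m) && decide (e m % 2 = 0)) := by
  have hF : Primrec (fun t : (ℕ × ℕ) × (ℕ × ℕ) =>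
      decide (t.1.1 * t.1.2 = 2 * t.2.1 * t.2.2) && decide (t.1.1 % 2 = 0)) := by
    have A : PrimrecPred (fun t : (ℕ × ℕ) × (ℕ × ℕ) => t.1.1 * t.1.2 = 2 * t.2.1 * t.2.2) :=
      Primrec.eq.comp
        (Primrec.nat_mul.comp (Primrec.fst.comp Primrec.fst) (Primrec.snd.comp Primrec.fst))
        (Primrec.nat_mul.comp (Primrec.nat_mul.comp (Primrec.const 2)
          (Primrec.fst.comp Primrec.snd)) (Primrec.snd.comp Primrec.snd))
    have B : PrimrecPred (fun t : (ℕ × ℕ) × (ℕ × ℕ) => t.1.1 % 2 = 0) :=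
      Primrec.eq.comp (Primrec.nat_mod.comp (Primrec.fst.comp Primrec.fst) (Primrec.const 2))
        (Primrec.const 0)
    exact Primrec.and.comp A.decide B.decide
  have hG : Computable (fun p : ℕ × ℕ => ((e p.2, D p.1), (N p.1, d p.2))) :=
    ((he.comp Computable.snd).pair (hD.comp Computable.fst)).pair
      ((hN.comp Computable.fst).pair (hd.comp Computable.snd))
  exact (hF.to_comp.comp hG).of_eq fun p => rfl

theorem div_computable (N D : ℕ → ℕ) (hN : Computable N) (hD : Computable D)
    (hpos : ∀ n, 0 < D n) : Computable (fun n => (N n : ℚ) / (D n : ℚ)) := by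
  let R : ℕ → ℕ → Bool := fun n m =>
    decide (Encodable.encode (rDec m).num * D n =
      2 * N n * (rDec m).den)
    && decide (Encodable.encode (rDec m).num % 2 = 0)
  have hR : Computable₂ R := by
    exact rel_computable _ _ N D (numEnc_computable.comp rDec_computable)
      (den_computable.comp rDec_computable) hN hD
  have hiff : ∀ n m, R n m = true ↔ rDec m = (N n : ℚ) / (D n : ℚ) := by
    intro n m
    set q := rDec m with hq
    have hd : (D n : ℚ) ≠ 0 := by exact_mod_cast (hpos n).ne'
    have hqd : (q.den : ℚ) ≠ 0 := by exact_mod_cast q.den_nz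
    have hqe : q = (q.num : ℚ) / (q.den : ℚ) := (Rat.num_div_den q).symm
    have hkey : q = (N n : ℚ) / (D n : ℚ) ↔ q.num * (D n : ℤ) = N n * (q.den : ℤ) := by
      rw [eq_div_iff hd]
      constructor
      · intro h
        rw [hqe, div_mul_eq_mul_div, div_eq_iff hqd] at h
        exact_mod_cast h
      · intro h
        rw [hqe, div_mul_eq_mul_div, div_eq_iff hqd]
        exact_mod_cast h
    rw [hkey]
    simp only [R, Bool.and_eq_true, decide_eq_true_eq, ← hq]
    cases hz : q.num with
    | ofNat k =>
      rw [enc_int_ofNat]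
      simp only [Int.ofNat_eq_natCast]
      norm_cast
      constructor
      · rintro ⟨h, -⟩
        rw [mul_assoc, mul_assoc] at h
        exact Nat.eq_of_mul_eq_mul_left (by norm_num) h
      · intro h
        refine ⟨by rw [mul_assoc, mul_assoc, h], by simp⟩
    | negSucc k =>
      rw [enc_int_negSucc]
      constructor
      · rintro ⟨-, h⟩; omega
      · intro h
        exfalso
        have h1 : Int.negSucc k * (D n : ℤ) < 0 :=
          mul_neg_of_neg_of_pos (Int.negSucc_lt_zero k) (by exact_mod_cast hpos n)
        have h2 : (0 : ℤ) ≤ N n * (q.den : ℤ) := by positivity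
        omega
  have : Computable (fun n => rEnc ((N n : ℚ) / (D n : ℚ))) := by
    apply computable_of_rel R hR
    · intro n
      rw [hiff]
      exact rDec_rEnc _
    · intro n m hm
      rw [Bool.eq_false_iff, Ne, hiff]
      intro h
      have := congrArg rEnc h
      rw [rEnc_rDec] at this
      exact absurd this hm.ne
  exact Computable.encode_iff.1 this

theorem pow2_computable : Computable (fun n : ℕ => 2 ^ n) := by
  have := Primrec.nat_rec' (f := fun n : ℕ => n) (g := fun _ => 1)
    (h := fun _ p => 2 * p.2) Primrec.id (Primrec.const _)
    (Primrec.nat_mul.comp (Primrec.const 2) (Primrec.snd.comp Primrec.snd))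
  refine this.to_comp.of_eq fun n => ?_
  induction n with
  | zero => rfl
  | succ n ih =>
    rw [pow_succ, mul_comm]
    exact congrArg (2 * ·) ih

/-- The running maximum of the fractions `N n / D n`, starting from `0 / 1`. -/
def runMax (N D : ℕ → ℕ) (n : ℕ) : ℕ × ℕ :=
  Nat.rec (0, 1) (fun y IH => bif decide (IH.1 * D y ≤ N y * IH.2) then (N y, D y) else IH) n

theorem runMax_computable (N D : ℕ → ℕ) (hN : Computable N) (hD : Computable D) :
    Computable (runMax N D) := by
  refine Computable.nat_rec (f := fun n : ℕ => n) (g := fun _ => ((0, 1) : ℕ × ℕ))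
    (h := fun _ p => bif decide (p.2.1 * D p.1 ≤ N p.1 * p.2.2) then (N p.1, D p.1) else p.2)
    Computable.id (Computable.const _) ?_
  have y : Computable (fun t : ℕ × (ℕ × (ℕ × ℕ)) => t.2.1) := Computable.fst.comp Computable.snd
  have i : Computable (fun t : ℕ × (ℕ × (ℕ × ℕ)) => t.2.2) := Computable.snd.comp Computable.snd
  have hle : Computable₂ (fun a b : ℕ => decide (a ≤ b)) :=
    (Primrec.nat_le.decide).to_comp
  exact Computable.cond
    (hle.comp (Primrec.nat_mul.to_comp.comp (Computable.fst.comp i) (hD.comp y))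
      (Primrec.nat_mul.to_comp.comp (hN.comp y) (Computable.snd.comp i)))
    ((hN.comp y).pair (hD.comp y)) i

theorem runMax_succ (N D : ℕ → ℕ) (n : ℕ) : runMax N D (n + 1) =
    if (runMax N D n).1 * D n ≤ N n * (runMax N D n).2 then (N n, D n) else runMax N D n := by
  rw [show runMax N D (n + 1) = bif decide ((runMax N D n).1 * D n ≤ N n * (runMax N D n).2)
    then (N n, D n) else runMax N D n from rfl]
  split_ifs with h <;> simp [h]

theorem runMax_pos (N D : ℕ → ℕ) (hD : ∀ n, 0 < D n) (n : ℕ) : 0 < (runMax N D n).2 := by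
  induction n with
  | zero => exact Nat.one_pos
  | succ n ih =>
    rw [runMax_succ]
    split_ifs
    · exact hD n
    · exact ih

theorem runMax_val (N D : ℕ → ℕ) (hD : ∀ n, 0 < D n) (n : ℕ) :
    ((runMax N D (n + 1)).1 : ℚ) / ((runMax N D (n + 1)).2 : ℚ) =
      max (((runMax N D n).1 : ℚ) / ((runMax N D n).2 : ℚ)) ((N n : ℚ) / (D n : ℚ)) := by
  have h1 : (0 : ℚ) < (runMax N D n).2 := by exact_mod_cast runMax_pos N D hD n
  have h2 : (0 : ℚ) < D n := by exact_mod_cast hD n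
  rw [runMax_succ]
  split_ifs with h
  · rw [max_eq_right]
    rw [div_le_div_iff₀ h1 h2]
    exact_mod_cast h
  · rw [max_eq_left]
    rw [div_le_div_iff₀ h2 h1]
    exact_mod_cast (not_le.1 h).le

theorem leftComputable_of_approx (a : ℕ → ℝ) (L : ℝ) (hmono : Monotone a) (h0 : ∀ n, 0 ≤ a n)
    (hlim : Tendsto a atTop (nhds L)) (q : ℕ → ℕ → ℚ) (hq : Computable₂ q)
    (happ : ∀ k n : ℕ, |a n - (q k n : ℝ)| ≤ 2 ^ (-(k : ℤ))) : LeftComputable L := by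
  let N : ℕ → ℕ := fun n => (q n n).num.toNat * 2 ^ n - (q n n).den
  let D : ℕ → ℕ := fun n => (q n n).den * 2 ^ n
  have hqq : Computable (fun n => q n n) := hq.comp Computable.id Computable.id
  have hN : Computable N := Primrec.nat_sub.to_comp.comp
    (Primrec.nat_mul.to_comp.comp (toNat_computable.comp hqq) pow2_computable)
    (den_computable.comp hqq)
  have hD : Computable D :=
    Primrec.nat_mul.to_comp.comp (den_computable.comp hqq) pow2_computable
  have hDpos : ∀ n, 0 < D n := fun n => Nat.mul_pos (q n n).den_pos (by positivity)
  have hM := runMax_computable N D hN hD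
  let r : ℕ → ℚ := fun n => ((runMax N D n).1 : ℚ) / ((runMax N D n).2 : ℚ)
  have hval : ∀ n, (N n : ℝ) / (D n : ℝ) = max 0 ((q n n : ℝ) - (2 ^ n)⁻¹) := by
    intro n
    have hd : (0 : ℝ) < (q n n).den := by exact_mod_cast (q n n).den_pos
    have hqe : (q n n : ℝ) = ((q n n).num : ℝ) / ((q n n).den : ℝ) := Rat.cast_def _
    have hp : (0 : ℝ) < 2 ^ n := by positivity
    have hNr : (N n : ℝ) = max 0 (((q n n).num : ℝ) * 2 ^ n - (q n n).den) := by
      have hz : (N n : ℤ) = max 0 ((q n n).num * 2 ^ n - (q n n).den) := by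
        simp only [N]
        have hdz : (0 : ℤ) < (q n n).den := by exact_mod_cast (q n n).den_pos
        rcases le_or_gt 0 (q n n).num with h | h
        · have e : (((q n n).num.toNat * 2 ^ n : ℕ) : ℤ) = (q n n).num * 2 ^ n := by
            push_cast; rw [Int.toNat_of_nonneg h]
          rw [← e]
          omega
        · have : (q n n).num * 2 ^ n < 0 := mul_neg_of_neg_of_pos h (by positivity)
          rw [Int.toNat_of_nonpos h.le]
          rw [max_eq_left (by linarith)]
          simp
      have := congrArg (fun z : ℤ => (z : ℝ)) hz
      simpa using this
    rw [hNr, hqe]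
    have hDr : (D n : ℝ) = (q n n).den * 2 ^ n := by simp [D]
    have hDp : (0 : ℝ) < D n := by exact_mod_cast hDpos n
    rw [← max_div_div_right hDp.le, zero_div, hDr]
    congr 1
    field_simp
  have hz : ∀ n : ℕ, (2 : ℝ) ^ (-(n : ℤ)) = (2 ^ n)⁻¹ := fun n => by simp
  have hle : ∀ n, (N n : ℝ) / (D n : ℝ) ≤ a n := by
    intro n
    rw [hval]
    have := abs_le.1 (happ n n)
    rw [hz] at this
    exact max_le (h0 n) (by linarith [this.1])
  have hge : ∀ n, a n - 2 * (2 ^ n)⁻¹ ≤ (N n : ℝ) / (D n : ℝ) := by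
    intro n
    rw [hval]
    have := abs_le.1 (happ n n)
    rw [hz] at this
    exact le_max_of_le_right (by linarith [this.2])
  have hrs : ∀ n, r (n + 1) = max (r n) ((N n : ℚ) / (D n : ℚ)) := runMax_val N D hDpos
  have hrsR : ∀ n, (r (n + 1) : ℝ) = max (r n : ℝ) ((N n : ℝ) / (D n : ℝ)) := by
    intro n
    rw [hrs]
    push_cast
    rfl
  have hub : ∀ n, (r (n + 1) : ℝ) ≤ a n := by
    intro n
    induction n with
    | zero =>
      rw [hrsR]
      refine max_le ?_ (hle 0)
      have : r 0 = 0 := by simp [r, runMax]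
      rw [this]; simpa using h0 0
    | succ n ih =>
      rw [hrsR]
      exact max_le (ih.trans (hmono (Nat.le_succ n))) (hle _)
  refine ⟨r, ?_, ?_, ?_⟩
  · exact div_computable _ _ (Computable.fst.comp hM) (Computable.snd.comp hM)
      (runMax_pos N D hDpos)
  · intro n
    rw [hrs]
    exact le_max_left _ _
  · rw [← tendsto_add_atTop_iff_nat 1]
    refine tendsto_of_tendsto_of_tendsto_of_le_of_le (g := fun n => a n - 2 * (2 ^ n)⁻¹) ?_ hlim
      ?_ hub
    · have : Tendsto (fun n : ℕ => ((2 : ℝ) ^ n)⁻¹) atTop (nhds 0) := by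
        have := tendsto_pow_atTop_nhds_zero_of_lt_one (r := (2 : ℝ)⁻¹) (by norm_num) (by norm_num)
        simpa using this
      simpa using hlim.sub (this.const_mul 2)
    · intro n
      change _ ≤ (r (n + 1) : ℝ)
      rw [hrsR]
      exact (hge n).trans (le_max_right _ _)

theorem leftComputable_integral (f : ℝ → ℝ) (P σsq : ℝ) (hP : 0 < P) (hσ : 0 < σsq)
    (hf : ∀ α, 0 ≤ f α)
    (hint : Integrable (fun α => Real.logb 2 (1 + P * α ^ 2 / σsq) * f α))
    (q : ℕ → ℕ → ℚ) (hq : Computable₂ q)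
    (happ : ∀ k n : ℕ,
      |(∫ α in (-(n : ℝ))..(n : ℝ), Real.logb 2 (1 + P * α ^ 2 / σsq) * f α) -
        (q k n : ℝ)| ≤ 2 ^ (-(k : ℤ))) :
    LeftComputable (∫ α, Real.logb 2 (1 + P * α ^ 2 / σsq) * f α) := by
  have hnn : ∀ α, 0 ≤ Real.logb 2 (1 + P * α ^ 2 / σsq) * f α := fun α =>
    mul_nonneg (Real.logb_nonneg (by norm_num)
      (by have : 0 ≤ P * α ^ 2 / σsq := by positivity
          linarith)) (hf α)
  refine leftComputable_of_approx
    (fun n : ℕ => ∫ α in (-(n : ℝ))..(n : ℝ), Real.logb 2 (1 + P * α ^ 2 / σsq) * f α) _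
    ?_ ?_ ?_ q hq happ
  · intro m n hmn
    have hmn' : (m : ℝ) ≤ n := by exact_mod_cast hmn
    have hm : (0 : ℝ) ≤ m := by positivity
    exact intervalIntegral.integral_mono_interval (by linarith) (by linarith) hmn'
      (Eventually.of_forall hnn) hint.intervalIntegrable
  · intro n
    have hn : (0 : ℝ) ≤ n := by positivity
    exact intervalIntegral.integral_nonneg (by linarith) (fun α _ => hnn α)
  · exact intervalIntegral_tendsto_integral hint
      (tendsto_neg_atTop_atBot.comp tendsto_natCast_atTop_atTop) tendsto_natCast_atTop_atTop

/-- Theorem 3 of the paper: if the truncated integrals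
`aₙ⁽ⁱ⁾ = ∫_{-n}^{n} log₂(1 + Pα²/σᵢ²) fᵢ(α) dα` are uniformly computably
approximable and the full integrals exist, then the secrecy capacity
`C_S = a⁽¹⁾ - a⁽²⁾` lies in `Δ₂`. -/
theorem stmt14 (f₁ f₂ : ℝ → ℝ) (P σ1sq σ2sq : ℝ)
    (hP : 0 < P) (hσ1 : 0 < σ1sq) (hσ2 : 0 < σ2sq)
    (hf₁nonneg : ∀ α, 0 ≤ f₁ α) (hf₂nonneg : ∀ α, 0 ≤ f₂ α)
    (hf₁int : Integrable f₁) (hf₂int : Integrable f₂)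
    (hf₁one : (∫ α, f₁ α) = 1) (hf₂one : (∫ α, f₂ α) = 1)
    (hint1 : Integrable (fun α => Real.logb 2 (1 + P * α ^ 2 / σ1sq) * f₁ α))
    (hint2 : Integrable (fun α => Real.logb 2 (1 + P * α ^ 2 / σ2sq) * f₂ α))
    (q₁ q₂ : ℕ → ℕ → ℚ) (hq₁ : Computable₂ q₁) (hq₂ : Computable₂ q₂)
    (happrox1 : ∀ k n : ℕ,
      |(∫ α in (-(n : ℝ))..(n : ℝ), Real.logb 2 (1 + P * α ^ 2 / σ1sq) * f₁ α) -
        (q₁ k n : ℝ)| ≤ 2 ^ (-(k : ℤ)))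
    (happrox2 : ∀ k n : ℕ,
      |(∫ α in (-(n : ℝ))..(n : ℝ), Real.logb 2 (1 + P * α ^ 2 / σ2sq) * f₂ α) -
        (q₂ k n : ℝ)| ≤ 2 ^ (-(k : ℤ))) :
    Delta2 ((∫ α, Real.logb 2 (1 + P * α ^ 2 / σ1sq) * f₁ α) -
      (∫ α, Real.logb 2 (1 + P * α ^ 2 / σ2sq) * f₂ α)) := by
  exact ⟨_, _,
    leftComputable_integral f₁ P σ1sq hP hσ1 hf₁nonneg hint1 q₁ hq₁ happrox1,
    leftComputable_integral f₂ P σ2sq hP hσ2 hf₂nonneg hint2 q₂ hq₂ happrox2, rfl⟩
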